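/- Let g ∈ GL(V), V finite-dimensional, with Jordan decomposition g = e h u. Then the recurrent set of the induced flow on ℙ(V) is R(g) = fix(h) ∩ fix(u), the intersection of the projective fixed-point sets of the hyperbolic and the unipotent Jordan components. -/

import Mathlib

open Filter Topology LinearAlgebra.Projectivization

instance projectivizationTopology {K V : Type*} [DivisionRing K] [AddCommGroup V]
    [Module K V] [TopologicalSpace V] : TopologicalSpace (ℙ K V) :=
  instTopologicalSpaceQuotient

/-- The flow induced on projective space by iterating a linear automorphism. -/
def projFlow {K V : Type*} [Field K] [AddCommGroup V] [Module K V]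
    (g : V ≃ₗ[K] V) (t : ℤ) : ℙ K V → ℙ K V :=
  Projectivization.map ((g ^ t : V ≃ₗ[K] V) : V →ₗ[K] V) (g ^ t).injective

/-!
Complexify, and let `W` be the space of vectors `w` for which `s n • g ^ n w` returns to `w`, for
given scalars `s n`. It is stable under everything that commutes with `g`. A nontrivial Jordan block
would make `g ^ n` grow by an extra factor `n`, so `g` is diagonalizable on `W`; and
`s n * μ ^ n → 1` for each of its eigenvalues `μ` there, so these share one modulus `r`. An
eigenvector of `g = e h u` for `μ` lies in the eigenspaces of `h` for `|μ|` and of `u` for `1`.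
A recurrent line `[v]` has `v ∈ W` for suitable `s`, so `h v = r v` and `u v = v`.

Conversely, on a line fixed by `h` and `u` the flows of `g` and `e` agree, and some powers of `e`
tend to the identity because all complex numbers of modulus one return to `1` simultaneously.
-/

open Module TensorProduct

lemma commute_of_commute_toLinearMap {R M : Type*} [Semiring R] [AddCommMonoid M] [Module R M]
    {f g : M ≃ₗ[R] M} (h : Commute (f : M →ₗ[R] M) (g : M →ₗ[R] M)) : Commute f g :=
  LinearEquiv.toLinearMap_injective h

lemma linearEquiv_pow_apply {R M : Type*} [Semiring R] [AddCommMonoid M] [Module R M]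
    (f : M ≃ₗ[R] M) (n : ℕ) (x : M) : (f ^ n) x = ((f : End R M) ^ n) x :=
  LinearMap.congr_fun (map_pow LinearEquiv.automorphismGroup.toLinearMapMonoidHom f n) x

section Projectivization

variable {K V : Type*} [Field K] [AddCommGroup V] [Module K V]

lemma projFlow_eq_zpow_smul (g : V ≃ₗ[K] V) (t : ℤ) (p : ℙ K V) : projFlow g t p = g ^ t • p :=
  rfl

lemma projFlow_mk_eq_self_of_apply_eq_smul {f : V ≃ₗ[K] V} {v : V} (hv : v ≠ 0) {a : K}
    (hfv : f v = a • v) (t : ℤ) :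
    projFlow f t (Projectivization.mk K v hv) = Projectivization.mk K v hv := by
  have hf : f ∈ MulAction.stabilizer (V ≃ₗ[K] V) (Projectivization.mk K v hv) :=
    (Projectivization.mk_eq_mk_iff' K _ _ _ _).2 ⟨a, hfv.symm⟩
  exact zpow_mem hf t

lemma omegaLimit_projFlow_mul_of_commute [TopologicalSpace V] {f g : V ≃ₗ[K] V}
    (hfg : Commute f g) {p : ℙ K V} (hp : ∀ t, projFlow g t p = p) (l : Filter ℤ) :
    omegaLimit l (projFlow (f * g)) {p} = omegaLimit l (projFlow f) {p} := by
  have h_orbit (t : ℤ) : projFlow (f * g) t p = projFlow f t p := by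
    rw [projFlow_eq_zpow_smul, hfg.mul_zpow, mul_smul, ← projFlow_eq_zpow_smul g, hp,
      projFlow_eq_zpow_smul]
  ext q
  simp only [mem_omegaLimit_singleton_iff_mapClusterPt, h_orbit]

lemma mk_mem_omegaLimit_iff_mapClusterPt [TopologicalSpace V] {g : V ≃ₗ[K] V} {v w : V}
    (hv : v ≠ 0) (hw : w ≠ 0) :
    Projectivization.mk K w hw ∈ omegaLimit atTop (projFlow g) {Projectivization.mk K v hv} ↔
      MapClusterPt (Projectivization.mk K w hw) atTop fun n : ℕ =>
        Projectivization.mk K ((g ^ n) v) ((g ^ n).map_ne_zero_iff.2 hv) := by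
  rw [mem_omegaLimit_singleton_iff_mapClusterPt, MapClusterPt, ← Nat.map_cast_int_atTop, map_map]
  rfl

lemma mk_mem_omegaLimit_of_mapClusterPt [TopologicalSpace V] {g : V ≃ₗ[K] V} {v w : V}
    (hv : v ≠ 0) (hw : w ≠ 0) (h : MapClusterPt w atTop fun n : ℕ => ((g : End K V) ^ n) v) :
    Projectivization.mk K w hw ∈ omegaLimit atTop (projFlow g) {Projectivization.mk K v hv} := by
  rw [mk_mem_omegaLimit_iff_mapClusterPt]
  simp only [← linearEquiv_pow_apply] at h
  have h_subtype : MapClusterPt (⟨w, hw⟩ : {x : V // x ≠ 0}) atTop fun n : ℕ =>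
      ⟨(g ^ n) v, (g ^ n).map_ne_zero_iff.2 hv⟩ :=
    IsInducing.subtypeVal.mapClusterPt_iff.1 h
  exact h_subtype.continuousAt_comp continuous_quotient_mk'.continuousAt

/-- The affine chart of `ℙ K V` defined by the linear functional `φ`: it sends a line to its point
on the hyperplane `φ = 1`, and a line in the kernel of `φ` to `0`. It turns convergence of lines
into convergence of rescaled vectors. -/
def affineChart (φ : Dual K V) : ℙ K V → V :=
  Projectivization.lift (fun w => (φ w)⁻¹ • (w : V)) fun a b t hab => by
    have ht : t ≠ 0 := fun h0 => a.2 (by rw [hab, h0, zero_smul])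
    simp only [hab, map_smul, smul_eq_mul, smul_smul, mul_inv_rev, inv_mul_cancel_right₀ ht]

lemma affineChart_mk (φ : Dual K V) {w : V} (hw : w ≠ 0) :
    affineChart φ (Projectivization.mk K w hw) = (φ w)⁻¹ • w :=
  rfl

lemma continuousAt_affineChart_mk [TopologicalSpace K] [T1Space K] [ContinuousInv₀ K]
    [TopologicalSpace V] [ContinuousSMul K V] (φ : StrongDual K V) {v : V} (hv : v ≠ 0)
    (hφv : φ v ≠ 0) : ContinuousAt (affineChart (φ : Dual K V)) (Projectivization.mk K v hv) := by
  have h_quot : IsQuotientMap (Projectivization.mk' K : {w : V // w ≠ 0} → ℙ K V) :=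
    isQuotientMap_quotient_mk'
  set S : Set (ℙ K V) := {p | affineChart (φ : Dual K V) p ≠ 0}
  have h_preimage : Projectivization.mk' K ⁻¹' S = {w : {w : V // w ≠ 0} | φ w ≠ 0} := by
    ext w
    simp [S, affineChart_mk, w.2]
  have hS : IsOpen S := by
    rw [← h_quot.isOpen_preimage, h_preimage]
    exact isOpen_ne.preimage (by fun_prop)
  have h_cont : ContinuousOn (affineChart (φ : Dual K V)) S := by
    rw [h_quot.continuousOn_isOpen_iff hS, h_preimage]
    exact (ContinuousOn.inv₀ (by fun_prop) fun _ hw => hw).smul (by fun_prop)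
  exact h_cont.continuousAt (hS.mem_nhds (by simp [S, affineChart_mk, hv, hφv]))

lemma exists_mapClusterPt_smul_of_mk_mem_omegaLimit [TopologicalSpace K]
    [IsTopologicalRing K] [T1Space K] [ContinuousInv₀ K] [TopologicalSpace V]
    [ContinuousSMul K V] [SeparatingDual K V] {g : V ≃ₗ[K] V} {v w : V} {hv : v ≠ 0} {hw : w ≠ 0}
    (h : Projectivization.mk K w hw ∈
      omegaLimit atTop (projFlow g) {Projectivization.mk K v hv}) :
    ∃ s : ℕ → K, MapClusterPt w atTop fun n => s n • ((g : End K V) ^ n) v := by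
  rw [mk_mem_omegaLimit_iff_mapClusterPt] at h
  obtain ⟨φ, hφw⟩ := SeparatingDual.exists_eq_one (R := K) hw
  have h_chart := h.continuousAt_comp
    (continuousAt_affineChart_mk φ hw (hφw.trans_ne one_ne_zero))
  refine ⟨fun n => (φ ((g ^ n) v))⁻¹, ?_⟩
  simpa [affineChart_mk, Function.comp_def, hφw, linearEquiv_pow_apply] using h_chart

end Projectivization

section RecurrentSubspace

variable {K X : Type*} [NormedField K] [AddCommGroup X] [Module K X]

/-- The vectors `x` such that `s n • (g ^ n) x` converges to `x` along `F`. Convergence is tested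
against every linear functional, so that `X` (later a complexification) needs no topology. -/
def recurrentSubspace (F : Filter ℕ) (s : ℕ → K) (g : End K X) : Submodule K X where
  carrier := {x | ∀ φ : Dual K X, Tendsto (fun n => s n * φ ((g ^ n) x)) F (𝓝 (φ x))}
  zero_mem' φ := by simpa using tendsto_const_nhds
  add_mem' hx hy φ := by simpa only [map_add, mul_add] using (hx φ).add (hy φ)
  smul_mem' c x hx φ := by
    simpa only [map_smul, smul_eq_mul, mul_left_comm] using (hx φ).const_mul c

variable {F : Filter ℕ} {s : ℕ → K} {g : End K X} {x : X} {μ : K}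

lemma mem_recurrentSubspace : x ∈ recurrentSubspace F s g ↔
    ∀ φ : Dual K X, Tendsto (fun n => s n * φ ((g ^ n) x)) F (𝓝 (φ x)) :=
  Iff.rfl

lemma apply_mem_recurrentSubspace_of_commute {A : End K X} (hA : Commute A g)
    (hx : x ∈ recurrentSubspace F s g) : A x ∈ recurrentSubspace F s g := fun φ => by
  have h_comm (n : ℕ) : (g ^ n) (A x) = A ((g ^ n) x) :=
    (LinearMap.congr_fun (hA.pow_right n) x).symm
  simpa only [h_comm, LinearMap.comp_apply] using hx (φ ∘ₗ A)

lemma mem_recurrentSubspace_iff_of_hasEigenvector (hx : g.HasEigenvector μ x) :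
    x ∈ recurrentSubspace F s g ↔ Tendsto (fun n => s n * μ ^ n) F (𝓝 1) := by
  simp only [mem_recurrentSubspace, hx.pow_apply, map_smul, smul_eq_mul, ← mul_assoc]
  constructor
  · intro h
    obtain ⟨φ, hφx⟩ := Projective.exists_dual_eq_one K hx.2
    simpa only [hφx, mul_one] using h φ
  · intro h φ
    simpa only [one_mul] using h.mul_const (φ x)

lemma norm_le_norm_of_hasEigenvector_mem_recurrentSubspace [F.NeBot] (hF : F ≤ atTop) {y : X}
    {ν : K} (hx : g.HasEigenvector μ x) (hy : g.HasEigenvector ν y)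
    (hxW : x ∈ recurrentSubspace F s g) (hyW : y ∈ recurrentSubspace F s g) : ‖μ‖ ≤ ‖ν‖ := by
  by_contra! hlt
  have hμ : μ ≠ 0 := norm_pos_iff.1 ((norm_nonneg ν).trans_lt hlt)
  have h_one_x := (mem_recurrentSubspace_iff_of_hasEigenvector hx).1 hxW
  have h_one_y := (mem_recurrentSubspace_iff_of_hasEigenvector hy).1 hyW
  have h_ratio_one : Tendsto (fun n => (ν / μ) ^ n) F (𝓝 1) := by
    rw [← div_one (1 : K)]
    refine (h_one_y.div h_one_x one_ne_zero).congr' ?_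
    filter_upwards [h_one_x.eventually_ne one_ne_zero] with n hn
    rw [Pi.div_apply, mul_div_mul_left _ _ (left_ne_zero_of_mul hn), div_pow]
  have h_ratio_zero : Tendsto (fun n => (ν / μ) ^ n) F (𝓝 0) :=
    (tendsto_pow_atTop_nhds_zero_of_norm_lt_one (by
      rwa [norm_div, div_lt_one (norm_pos_iff.2 hμ)])).mono_left hF
  exact one_ne_zero (tendsto_nhds_unique h_ratio_one h_ratio_zero)

end RecurrentSubspace

lemma smul_pow_apply_of_apply_eq_smul_add {R M : Type*} [CommRing R] [AddCommGroup M] [Module R M]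
    {g : End R M} {μ : R} {x y : M} (hx : g x = μ • x) (hy : g y = μ • y + x) (n : ℕ) :
    μ • (g ^ n) y = μ ^ n • (μ • y + (n : R) • x) := by
  induction n with
  | zero => simp
  | succ n ih =>
    rw [pow_succ', End.mul_apply, ← map_smul, ih, map_smul, map_add, map_smul, map_smul, hx, hy]
    push_cast
    module

section JordanBlocks

variable {𝕜 X : Type*} [RCLike 𝕜] [AddCommGroup X] [Module 𝕜 X] {F : Filter ℕ} [F.NeBot]
  {s : ℕ → 𝕜} {g : End 𝕜 X} {x y : X} {μ : 𝕜}

-- On a Jordan block of size two, `g ^ n` grows faster than `μ ^ n` by a factor `n`.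
lemma eq_zero_of_apply_eq_smul_add_of_mem_recurrentSubspace (hF : F ≤ atTop) (hx : g x = μ • x)
    (hy : g y = μ • y + x) (hyW : y ∈ recurrentSubspace F s g) : x = 0 := by
  by_contra hx0
  have hxW : x ∈ recurrentSubspace F s g := by
    have hgy := apply_mem_recurrentSubspace_of_commute (Commute.refl g) hyW
    rw [hy] at hgy
    simpa using sub_mem hgy (Submodule.smul_mem _ μ hyW)
  have h_one : Tendsto (fun n => s n * μ ^ n) F (𝓝 1) :=
    (mem_recurrentSubspace_iff_of_hasEigenvector
      ⟨End.mem_eigenspace_iff.2 hx, hx0⟩).1 hxW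
  obtain ⟨φ, hφx⟩ := Projective.exists_dual_eq_one 𝕜 hx0
  have h_zero : Tendsto (fun n : ℕ => s n * μ ^ n * n) F (𝓝 0) := by
    have h_sub := ((hyW φ).const_mul μ).sub (h_one.mul_const (μ * φ y))
    rw [one_mul, sub_self] at h_sub
    refine h_sub.congr fun n => ?_
    have h_pow := congrArg φ (smul_pow_apply_of_apply_eq_smul_add hx hy n)
    simp only [map_smul, map_add, smul_eq_mul, hφx, mul_one] at h_pow
    linear_combination s n * h_pow
  have h_infty : Tendsto (fun n : ℕ => ‖s n * μ ^ n * n‖) F atTop := by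
    simp only [norm_mul _ (Nat.cast _), RCLike.norm_natCast]
    exact h_one.norm.pos_mul_atTop (by simp) (tendsto_natCast_atTop_atTop.mono_left hF)
  exact not_tendsto_nhds_of_tendsto_atTop h_infty _ h_zero.norm

lemma recurrentSubspace_inf_maxGenEigenspace_le_eigenspace (hF : F ≤ atTop) :
    recurrentSubspace F s g ⊓ g.maxGenEigenspace μ ≤ g.eigenspace μ := by
  rintro x ⟨hxW, hx⟩
  obtain ⟨k, hk⟩ := (End.mem_maxGenEigenspace _ _ _).1 hx
  set N : End 𝕜 X := g - μ • 1
  have h_apply (z : X) : g z = μ • z + N z := by simp [N]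
  have h_comm : Commute N g := (Commute.refl g).sub_left ((Commute.one_left g).smul_left μ)
  suffices N x = 0 by rw [End.mem_eigenspace_iff, h_apply, this, add_zero]
  have h_descend (j : ℕ) (hj : (N ^ (j + 2)) x = 0) : (N ^ (j + 1)) x = 0 := by
    rw [pow_succ', End.mul_apply] at hj
    refine eq_zero_of_apply_eq_smul_add_of_mem_recurrentSubspace (y := (N ^ j) x) (μ := μ) hF ?_ ?_
      (apply_mem_recurrentSubspace_of_commute (h_comm.pow_left j) hxW)
    · rw [h_apply, hj, add_zero]
    · rw [h_apply, pow_succ', End.mul_apply]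
  have h_one (j : ℕ) : (N ^ (j + 1)) x = 0 → N x = 0 := by
    induction j with
    | zero => simp
    | succ j ih => exact fun hj => ih (h_descend j hj)
  exact h_one k (by rw [pow_succ', End.mul_apply, hk, map_zero])

end JordanBlocks

lemma le_of_forall_inf_eigenspace_le {K X : Type*} [Field K] [AddCommGroup X] [Module K X]
    [FiniteDimensional K X] {f : End K X} (hf : ⨆ μ, f.eigenspace μ = ⊤) {p q : Submodule K X}
    (hp : ∀ x ∈ p, f x ∈ p) (h : ∀ μ, p ⊓ f.eigenspace μ ≤ q) : p ≤ q :=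
  (p.eq_iSup_inf_genEigenspace 1 hp hf).trans_le (iSup_le h)

lemma eq_one_of_hasEigenvector_of_isNilpotent_sub_one {R M : Type*} [CommRing R] [IsDomain R]
    [AddCommGroup M] [Module R M] [IsTorsionFree R M] {u : End R M} (hu : IsNilpotent (u - 1))
    {a : R} {x : M} (hx : u.HasEigenvector a x) : a = 1 := by
  obtain ⟨k, hk⟩ := hu
  have hx_sub : (u - 1).HasEigenvector (a - 1) x :=
    ⟨End.mem_eigenspace_iff.2 (by simp [hx.apply_eq_smul, sub_smul]), hx.2⟩
  have h_pow : (a - 1) ^ k • x = 0 := by rw [← hx_sub.pow_apply, hk, LinearMap.zero_apply]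
  exact sub_eq_zero.1 (eq_zero_of_pow_eq_zero ((smul_eq_zero.1 h_pow).resolve_right hx.2))

lemma eq_and_apply_eq_self_of_mul_apply_eq_smul {K X : Type*} [Field K] [AddCommGroup X]
    [Module K X] {f u : End K X} (hfu : Commute f u) (hu : IsNilpotent (u - 1)) {a μ : K}
    (ha : a ≠ 0) {x : X} (hx0 : x ≠ 0) (hfx : f x = a • x) (hfux : (f * u) x = μ • x) :
    μ = a ∧ u x = x := by
  have hux : u x = (μ / a) • x := by
    rw [hfu.eq, End.mul_apply, hfx, map_smul] at hfux
    rw [div_eq_inv_mul, mul_smul, ← hfux, inv_smul_smul₀ ha]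
  have h_div : μ / a = 1 :=
    eq_one_of_hasEigenvector_of_isNilpotent_sub_one hu ⟨End.mem_eigenspace_iff.2 hux, hx0⟩
  exact ⟨(div_eq_one_iff_eq ha).1 h_div, by rw [hux, h_div, one_smul]⟩

-- The identity map is an element of the compact group `G → G`, hence recurrent there.
lemma exists_ultrafilter_forall_tendsto_pow_one (G : Type*) [Group G] [TopologicalSpace G]
    [CompactSpace G] [IsTopologicalGroup G] :
    ∃ U : Ultrafilter ℕ, ↑U ≤ (atTop : Filter ℕ) ∧
      ∀ z : G, Tendsto (fun n => z ^ n) U (𝓝 1) := by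
  obtain ⟨U, hU, h_tendsto⟩ :=
    mapClusterPt_iff_ultrafilter.1 (mapClusterPt_one_atTop_pow (id : G → G))
  exact ⟨U, hU, tendsto_pi_nhds.1 h_tendsto⟩

section Complex

variable {X : Type*} [AddCommGroup X] [Module ℂ X]

/-- Elliptic endomorphisms, the type of the Jordan component `e`: semisimple, with all eigenvalues
on the unit circle. A real endomorphism is to be complexified first. -/
def IsElliptic (e : End ℂ X) : Prop :=
  e.IsSemisimple ∧ ∀ μ ∈ spectrum ℂ e, ‖μ‖ = 1

/-- Hyperbolic endomorphisms, the type of the Jordan component `h`: semisimple, with all eigenvalues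
real and positive. A real endomorphism is to be complexified first. -/
def IsHyperbolic (h : End ℂ X) : Prop :=
  h.IsSemisimple ∧ ∀ μ ∈ spectrum ℂ h, μ.im = 0 ∧ 0 < μ.re

variable [FiniteDimensional ℂ X]

lemma exists_recurrentSubspace_le_iSup_eigenspace {F : Filter ℕ} [F.NeBot] (hF : F ≤ atTop)
    (s : ℕ → ℂ) (g : End ℂ X) :
    ∃ r : ℝ, recurrentSubspace F s g ≤ ⨆ μ ∈ Metric.sphere (0 : ℂ) r, g.eigenspace μ := by
  set W := recurrentSubspace F s g
  obtain ⟨r, hr⟩ : ∃ r : ℝ, ∀ μ x, g.HasEigenvector μ x → x ∈ W → ‖μ‖ = r := by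
    by_cases hW : ∃ ν y, g.HasEigenvector ν y ∧ y ∈ W
    · obtain ⟨ν, y, hy, hyW⟩ := hW
      exact ⟨‖ν‖, fun μ x hx hxW => le_antisymm
        (norm_le_norm_of_hasEigenvector_mem_recurrentSubspace hF hx hy hxW hyW)
        (norm_le_norm_of_hasEigenvector_mem_recurrentSubspace hF hy hx hyW hxW)⟩
    · exact ⟨0, fun μ x hx hxW => (hW ⟨μ, x, hx, hxW⟩).elim⟩
  have h_decomp : W = ⨆ μ, W ⊓ g.maxGenEigenspace μ :=
    W.eq_iSup_inf_genEigenspace ⊤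
      (fun _ => apply_mem_recurrentSubspace_of_commute (Commute.refl g))
      g.iSup_maxGenEigenspace_eq_top
  refine ⟨r, h_decomp.trans_le (iSup_le fun μ x hx => ?_)⟩
  rcases eq_or_ne x 0 with rfl | hx0
  · exact zero_mem _
  have hxμ : x ∈ g.eigenspace μ := recurrentSubspace_inf_maxGenEigenspace_le_eigenspace hF hx
  exact Submodule.mem_iSup_of_mem μ
    (Submodule.mem_iSup_of_mem (mem_sphere_zero_iff_norm.2 (hr μ x ⟨hxμ, hx0⟩ hx.1)) hxμ)

lemma eigenspace_mul_mul_le_eigenspace_inf_eigenspace {e h u : End ℂ X} (heh : Commute e h)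
    (heu : Commute e u) (hhu : Commute h u) (he : IsElliptic e) (hh : IsHyperbolic h)
    (hu : IsNilpotent (u - 1)) (μ : ℂ) :
    (e * h * u).eigenspace μ ≤ h.eigenspace (‖μ‖ : ℂ) ⊓ u.eigenspace 1 := by
  have he_comm : Commute (e * h * u) e := ((Commute.refl e).mul_left heh.symm).mul_left heu.symm
  have hh_comm : Commute (e * h * u) h := (heh.mul_left (Commute.refl h)).mul_left hhu.symm
  refine le_of_forall_inf_eigenspace_le hh.1.iSup_eigenspace_eq_top
    (End.mapsTo_genEigenspace_of_comm hh_comm μ 1) fun l => ?_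
  refine le_of_forall_inf_eigenspace_le he.1.iSup_eigenspace_eq_top
    (fun x hx => ⟨End.mapsTo_genEigenspace_of_comm he_comm μ 1 hx.1,
      End.mapsTo_genEigenspace_of_comm heh.symm l 1 hx.2⟩) fun ε => ?_
  rintro x ⟨⟨hgx, hhx⟩, hex⟩
  rcases eq_or_ne x 0 with rfl | hx0
  · exact zero_mem _
  have hl := hh.2 l (End.hasEigenvalue_of_hasEigenvector ⟨hhx, hx0⟩).mem_spectrum
  have hε := he.2 ε (End.hasEigenvalue_of_hasEigenvector ⟨hex, hx0⟩).mem_spectrum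
  have hεl : ε * l ≠ 0 := mul_ne_zero (norm_ne_zero_iff.1 (hε.trans_ne one_ne_zero)) fun h0 =>
    hl.2.ne' (by rw [h0, Complex.zero_re])
  have hehx : (e * h) x = (ε * l) • x := by
    rw [End.mul_apply, End.mem_eigenspace_iff.1 hhx, map_smul, End.mem_eigenspace_iff.1 hex,
      smul_smul, mul_comm]
  obtain ⟨hμ, hux⟩ := eq_and_apply_eq_self_of_mul_apply_eq_smul (heu.mul_left hhu) hu hεl hx0 hehx
    (End.mem_eigenspace_iff.1 hgx)
  have hl_norm : (‖μ‖ : ℂ) = l := by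
    rw [hμ, norm_mul, hε, one_mul]
    exact Complex.norm_of_nonneg' (Complex.nonneg_iff.2 ⟨hl.2.le, hl.1.symm⟩)
  exact ⟨hl_norm ▸ hhx, End.mem_eigenspace_iff.2 (hux.trans (one_smul ℂ x).symm)⟩

lemma exists_apply_eq_of_mem_recurrentSubspace {F : Filter ℕ} [F.NeBot] (hF : F ≤ atTop)
    (s : ℕ → ℂ) {e h u : End ℂ X} (heh : Commute e h) (heu : Commute e u) (hhu : Commute h u)
    (he : IsElliptic e) (hh : IsHyperbolic h) (hu : IsNilpotent (u - 1)) {w : X}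
    (hw : w ∈ recurrentSubspace F s (e * h * u)) :
    ∃ r : ℝ, h w = (r : ℂ) • w ∧ u w = w := by
  obtain ⟨r, hr⟩ := exists_recurrentSubspace_le_iSup_eigenspace hF s (e * h * u)
  have h_le : ⨆ μ ∈ Metric.sphere (0 : ℂ) r, (e * h * u).eigenspace μ ≤
      h.eigenspace (r : ℂ) ⊓ u.eigenspace 1 := iSup₂_le fun μ hμ => by
    rw [← mem_sphere_zero_iff_norm.1 hμ]
    exact eigenspace_mul_mul_le_eigenspace_inf_eigenspace heh heu hhu he hh hu μ
  obtain ⟨hhw, huw⟩ := h_le (hr hw)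
  exact ⟨r, End.mem_eigenspace_iff.1 hhw, by simpa using End.mem_eigenspace_iff.1 huw⟩

lemma exists_ultrafilter_recurrentSubspace_eq_top {e : End ℂ X} (he : IsElliptic e) :
    ∃ U : Ultrafilter ℕ, ↑U ≤ (atTop : Filter ℕ) ∧ recurrentSubspace U 1 e = ⊤ := by
  obtain ⟨U, hU, h_circle⟩ := exists_ultrafilter_forall_tendsto_pow_one Circle
  refine ⟨U, hU, eq_top_iff.2 (he.1.iSup_eigenspace_eq_top.ge.trans (iSup_le fun μ x hx => ?_))⟩
  rcases eq_or_ne x 0 with rfl | hx0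
  · exact zero_mem _
  have hμ : ‖μ‖ = 1 := he.2 μ (End.hasEigenvalue_of_hasEigenvector ⟨hx, hx0⟩).mem_spectrum
  rw [mem_recurrentSubspace_iff_of_hasEigenvector ⟨hx, hx0⟩]
  have h_pow := (continuous_subtype_val.tendsto (1 : Circle)).comp
    (h_circle ⟨μ, mem_sphere_zero_iff_norm.2 hμ⟩)
  simp only [Pi.one_apply, one_mul]
  exact h_pow

end Complex

section Complexification

variable {V : Type*} [AddCommGroup V] [Module ℝ V] [TopologicalSpace V] [IsTopologicalAddGroup V]
  [ContinuousSMul ℝ V] [T2Space V] [FiniteDimensional ℝ V]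

lemma one_tmul_mem_recurrentSubspace_baseChange_iff {F : Filter ℕ} {s : ℕ → ℝ} {g : End ℝ V}
    {v : V} :
    (1 : ℂ) ⊗ₜ[ℝ] v ∈ recurrentSubspace F (fun n => (s n : ℂ)) (g.baseChange ℂ) ↔
      Tendsto (fun n => s n • (g ^ n) v) F (𝓝 v) := by
  simp only [mem_recurrentSubspace, ← LinearMap.baseChange_pow, LinearMap.baseChange_tmul]
  constructor
  · intro h
    let b := finBasis ℝ V
    rw [b.equivFunL.toHomeomorph.isInducing.tendsto_nhds_iff, tendsto_pi_nhds]
    intro j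
    rw [← tendsto_ofReal_iff]
    simpa [Function.comp_def] using h ((b.baseChange ℂ).coord j)
  · intro h φ
    let ψ : V →ₗ[ℝ] ℂ := φ.restrictScalars ℝ ∘ₗ TensorProduct.mk ℝ ℂ V 1
    have h_cont := (ψ.continuous_of_finiteDimensional.tendsto v).comp h
    simpa [ψ, Function.comp_def] using h_cont

lemma exists_apply_eq_smul_of_tendsto_smul_pow_apply {F : Filter ℕ} [F.NeBot] (hF : F ≤ atTop)
    {s : ℕ → ℝ} {e h u : End ℝ V} (heh : Commute e h) (heu : Commute e u) (hhu : Commute h u)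
    (he : IsElliptic (e.baseChange ℂ)) (hh : IsHyperbolic (h.baseChange ℂ))
    (hu : IsNilpotent (u - 1)) {v : V}
    (hv : Tendsto (fun n => s n • ((e * h * u) ^ n) v) F (𝓝 v)) :
    ∃ r : ℝ, h v = r • v ∧ u v = v := by
  let Φ := End.baseChangeHom ℝ ℂ V
  have hu_complex : IsNilpotent (Φ u - 1) := by
    rw [← map_one Φ, ← map_sub]
    exact hu.map Φ
  have hv_mem : (1 : ℂ) ⊗ₜ[ℝ] v ∈ recurrentSubspace F (fun n => (s n : ℂ)) (Φ e * Φ h * Φ u) := by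
    rw [← map_mul, ← map_mul]
    exact one_tmul_mem_recurrentSubspace_baseChange_iff.2 hv
  obtain ⟨r, hhv, huv⟩ := exists_apply_eq_of_mem_recurrentSubspace hF _ (heh.map Φ) (heu.map Φ)
    (hhu.map Φ) he hh hu_complex hv_mem
  have h_inj : Function.Injective (TensorProduct.mk ℝ ℂ V 1) :=
    Module.FaithfullyFlat.tensorProduct_mk_injective V
  refine ⟨r, h_inj ?_, h_inj huv⟩
  rw [map_smul]
  exact hhv

lemma exists_ultrafilter_tendsto_pow_apply {e : End ℝ V} (he : IsElliptic (e.baseChange ℂ)) :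
    ∃ U : Ultrafilter ℕ, ↑U ≤ (atTop : Filter ℕ) ∧
      ∀ v, Tendsto (fun n => (e ^ n) v) U (𝓝 v) := by
  obtain ⟨U, hU, h_top⟩ := exists_ultrafilter_recurrentSubspace_eq_top he
  refine ⟨U, hU, fun v => ?_⟩
  have h_mem : (1 : ℂ) ⊗ₜ[ℝ] v ∈ recurrentSubspace U (fun _ => ((1 : ℝ) : ℂ)) (e.baseChange ℂ) := by
    rw [Complex.ofReal_one]
    exact h_top.ge Submodule.mem_top
  simpa only [one_smul] using one_tmul_mem_recurrentSubspace_baseChange_iff.1 h_mem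

end Complexification

/-- Let `g = e h u` be the multiplicative Jordan decomposition of
`g ∈ GL(V)`, `V` finite dimensional.  Then the recurrent set of the induced flow on
`ℙ(V)`, `R(g) = {[x] : [x] ∈ ω([x])}`, equals the intersection of the projective fixed
point sets of the hyperbolic and unipotent Jordan components. -/
theorem recurrent_set_eq_fix_inter_fix
    {V : Type*} [NormedAddCommGroup V] [NormedSpace ℝ V] [FiniteDimensional ℝ V]
    (g e h u : V ≃ₗ[ℝ] V) (hg : g = e * h * u)
    (heh : Commute (e : V →ₗ[ℝ] V) (h : V →ₗ[ℝ] V))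
    (heu : Commute (e : V →ₗ[ℝ] V) (u : V →ₗ[ℝ] V))
    (hhu : Commute (h : V →ₗ[ℝ] V) (u : V →ₗ[ℝ] V))
    (he : Module.End.IsSemisimple (LinearMap.baseChange ℂ (e : V →ₗ[ℝ] V)) ∧
      ∀ μ ∈ spectrum ℂ (LinearMap.baseChange ℂ (e : V →ₗ[ℝ] V)), ‖μ‖ = 1)
    (hh : Module.End.IsSemisimple (LinearMap.baseChange ℂ (h : V →ₗ[ℝ] V)) ∧
      ∀ μ ∈ spectrum ℂ (LinearMap.baseChange ℂ (h : V →ₗ[ℝ] V)), μ.im = 0 ∧ 0 < μ.re)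
    (hu : IsNilpotent ((u : V →ₗ[ℝ] V) - 1)) :
    {p : ℙ ℝ V | p ∈ omegaLimit atTop (projFlow g) {p}} =
      {p : ℙ ℝ V | ∀ t : ℤ, projFlow h t p = p} ∩
      {p : ℙ ℝ V | ∀ t : ℤ, projFlow u t p = p} := by
  ext p
  induction p using Projectivization.ind with | h v hv
  simp only [Set.mem_ofPred_eq, Set.mem_inter_iff]
  subst hg
  constructor
  · intro h_rec
    obtain ⟨s, hs⟩ := exists_mapClusterPt_smul_of_mk_mem_omegaLimit h_rec
    obtain ⟨U, hU, h_tendsto⟩ := mapClusterPt_iff_ultrafilter.1 hs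
    obtain ⟨r, hhv, huv⟩ :=
      exists_apply_eq_smul_of_tendsto_smul_pow_apply hU heh heu hhu he hh hu h_tendsto
    exact ⟨projFlow_mk_eq_self_of_apply_eq_smul hv hhv,
      projFlow_mk_eq_self_of_apply_eq_smul hv (huv.trans (one_smul ℝ v).symm)⟩
  · rintro ⟨hp_h, hp_u⟩
    have heh_u : Commute (e * h) u := (commute_of_commute_toLinearMap heu).mul_left
      (commute_of_commute_toLinearMap hhu)
    rw [omegaLimit_projFlow_mul_of_commute heh_u hp_u,
      omegaLimit_projFlow_mul_of_commute (commute_of_commute_toLinearMap heh) hp_h]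
    obtain ⟨U, hU, h_tendsto⟩ := exists_ultrafilter_tendsto_pow_apply he
    exact mk_mem_omegaLimit_of_mapClusterPt hv hv
      (mapClusterPt_iff_ultrafilter.2 ⟨U, hU, h_tendsto v⟩)
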